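/- arXiv:2112.14044 — 3 statements merged into one kernel-verified Lean document; each statement's English description precedes it below -/
import Mathlib

section
/- Uniform deletion after a uniform random permutation equals dropping the last coordinate after a uniform random permutation: for every tuple v : Fin (K+1) → X, (perm v).bind del = PMF.map (fun w => w ∘ Fin.castSucc) (perm v). -/
universe u

/-- Pushforward of the uniform distribution on permutations under `σ ↦ v ∘ σ`. -/
noncomputable def perm {X : Type u} {K : ℕ} (v : Fin K → X) : PMF (Fin K → X) :=
  PMF.map (fun σ => v ∘ σ) (PMF.uniformOfFintype (Equiv.Perm (Fin K)))

/-- Uniform deletion of one coordinate: pushforward of the uniform distribution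
on `Fin (K+1)` under `i ↦ v ∘ Fin.succAbove i`. -/
noncomputable def del {X : Type u} {K : ℕ} (v : Fin (K + 1) → X) : PMF (Fin K → X) :=
  PMF.map (fun i => v ∘ Fin.succAbove i) (PMF.uniformOfFintype (Fin (K + 1)))

/-!
A uniformly random reordering of a tuple is exchangeable: permuting its coordinates does not change
its law. Any two injective selections of coordinates differ by a permutation, so they have the same
law, and hence so does a selection drawn independently of the reordering. Deleting a uniform
coordinate and dropping the last one are two such selections.
-/

theorem map_equiv_uniformOfFintype {α β : Type*} [Fintype α] [Nonempty α] [Fintype β] [Nonempty β]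
    (e : α ≃ β) : (PMF.uniformOfFintype α).map e = PMF.uniformOfFintype β := by
  ext b
  rw [PMF.map_apply, tsum_eq_single (e.symm b)]
  · simp [Fintype.card_congr e]
  · intro a ha
    exact if_neg fun hb => ha (e.eq_symm_apply.2 hb.symm)

section

variable {X : Type u} {ι : Type*} {n : ℕ} (v : Fin n → X)

theorem perm_eq_map_uniformOfFintype :
    perm v = PMF.map (fun σ : Equiv.Perm (Fin n) => v ∘ ⇑σ) (PMF.uniformOfFintype _) :=
  -- The binder `σ` in the definition of `perm` elaborates to a function, so the coercion of
  -- permutations to functions enters there as a separate pushforward.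
  PMF.map_comp _ _ _

theorem perm_map_comp_perm (τ : Equiv.Perm (Fin n)) :
    (perm v).map (fun w => w ∘ ⇑τ) = perm v := by
  simp only [perm_eq_map_uniformOfFintype]
  conv_rhs => rw [← map_equiv_uniformOfFintype (Equiv.mulRight τ)]
  rw [PMF.map_comp, PMF.map_comp]
  rfl

theorem perm_map_comp_embedding_eq (f g : ι ↪ Fin n) :
    (perm v).map (fun w => w ∘ ⇑f) = (perm v).map (fun w => w ∘ ⇑g) := by
  have : Finite ι := Finite.of_injective g g.injective
  obtain ⟨τ, hτ⟩ := Equiv.Perm.exists_extending_pair g f g.injective f.injective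
  calc (perm v).map (fun w => w ∘ ⇑f)
      = ((perm v).map fun w => w ∘ ⇑τ).map (fun w => w ∘ ⇑g) := by
        rw [PMF.map_comp, ← funext hτ]
        rfl
    _ = (perm v).map (fun w => w ∘ ⇑g) := by rw [perm_map_comp_perm]

theorem perm_bind_del_general (p : PMF (ι ↪ Fin n)) (g : ι ↪ Fin n) :
    ((perm v).bind fun w => p.map fun f : ι ↪ Fin n => w ∘ ⇑f) = (perm v).map fun w => w ∘ ⇑g :=
  calc ((perm v).bind fun w => p.map fun f : ι ↪ Fin n => w ∘ ⇑f)
      = p.bind fun f => (perm v).map fun w => w ∘ ⇑f := PMF.bind_comm _ _ _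
    _ = p.bind fun _ => (perm v).map fun w => w ∘ ⇑g := by
        simp only [perm_map_comp_embedding_eq v _ g]
    _ = (perm v).map fun w => w ∘ ⇑g := PMF.bind_const _ _

end

theorem del_eq_map_succAboveEmb {X : Type u} {K : ℕ} (w : Fin (K + 1) → X) :
    del w = PMF.map (fun f : Fin K ↪ Fin (K + 1) => w ∘ ⇑f)
      ((PMF.uniformOfFintype _).map Fin.succAboveEmb) := by
  rw [PMF.map_comp]
  rfl

/-- Uniform deletion after a uniform random permutation equals dropping the last
coordinate after a uniform random permutation. -/
theorem perm_bind_del {X : Type u} {K : ℕ} (v : Fin (K + 1) → X) :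
    (perm v).bind del = PMF.map (fun w => w ∘ Fin.castSucc) (perm v) := by
  rw [funext del_eq_map_succAboveEmb]
  exact perm_bind_del_general v _ Fin.castSuccEmb
end

section
/- Frequentist learning after draw-and-delete is frequentist learning: for K ≥ 1 and every multiset m : Sym X (K+1), (DD m).bind Flrn = Flrn m. -/
open scoped ENNReal

universe u

/-- Accumulation: send a tuple to its multiset of values. -/
def acc {X : Type u} {K : ℕ} (v : Fin K → X) : Sym X K :=
  ⟨(List.ofFn v : List X), by simp⟩

/-!
Learning from the multiset of `v` is sampling a coordinate of `v` uniformly. Learning after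
draw-and-delete therefore samples a uniform position among those that survive the deletion of a
uniform position. Each position is equally likely to be the result, so the position sampled is
again uniform.
-/

open Finset

lemma acc_surjective {X : Type u} {K : ℕ} :
    Function.Surjective (acc : (Fin K → X) → Sym X K) := by
  rintro ⟨⟨l⟩, rfl⟩
  exact ⟨l.get, Subtype.ext (congrArg Multiset.ofList l.ofFn_get)⟩

lemma count_acc {X : Type u} [DecidableEq X] {K : ℕ} (v : Fin K → X) (x : X) :
    (acc v).toMultiset.count x = #{i | v i = x} := by
  calc (acc v).toMultiset.count x = (univ.val.map v).count x :=
        congrArg (Multiset.count x) (Fin.univ_val_map v).symm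
    _ = #{i | v i = x} := by
        simp only [Multiset.count_map, card_def, filter_val, eq_comm]

lemma map_uniformOfFintype_apply {α β : Type*} [Fintype α] [Nonempty α] [DecidableEq β]
    (f : α → β) (b : β) :
    (PMF.uniformOfFintype α).map f b = (#{a | f a = b} : ℝ≥0∞) / Fintype.card α := by
  simp only [PMF.map_apply, PMF.uniformOfFintype_apply, tsum_fintype, eq_comm (a := b),
    ← sum_filter, sum_const, nsmul_eq_mul, div_eq_mul_inv]

lemma sum_card_filter_succAbove_eq {n : ℕ} (j : Fin (n + 1)) :
    ∑ i : Fin (n + 1), #{k | i.succAbove k = j} = n := by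
  have fiber_self : #{k | j.succAbove k = j} = 0 := by
    simp only [Fin.succAbove_ne, filter_false, card_empty]
  have fiber_ne {i : Fin (n + 1)} (hi : j ≠ i) : #{k | i.succAbove k = j} = 1 := by
    obtain ⟨k, rfl⟩ := Fin.exists_succAbove_eq hi
    simp only [Fin.succAbove_right_inj, filter_eq', mem_univ, if_true, card_singleton]
  calc ∑ i : Fin (n + 1), #{k | i.succAbove k = j}
      = #{k | j.succAbove k = j} + ∑ l, #{k | (j.succAbove l).succAbove k = j} :=
        Fin.sum_univ_succAbove _ j
    _ = n := by
        simp only [fiber_self, fiber_ne (Fin.ne_succAbove j _), sum_const, card_univ,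
          Fintype.card_fin, smul_eq_mul, mul_one, zero_add]

lemma uniformOfFintype_bind_map_succAbove (n : ℕ) [NeZero n] :
    (PMF.uniformOfFintype (Fin (n + 1))).bind
        (fun i => (PMF.uniformOfFintype (Fin n)).map i.succAbove) =
      PMF.uniformOfFintype (Fin (n + 1)) := by
  ext j
  calc _ = ∑ i : Fin (n + 1), ((n + 1 : ℕ) : ℝ≥0∞)⁻¹ * (#{k | i.succAbove k = j} / n) := by
        simp only [PMF.bind_apply, tsum_fintype, PMF.uniformOfFintype_apply,
          map_uniformOfFintype_apply, Fintype.card_fin]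
    _ = ((n + 1 : ℕ) : ℝ≥0∞)⁻¹ * (n / n) := by
        simp only [div_eq_mul_inv, ← mul_sum, ← sum_mul, ← Nat.cast_sum,
          sum_card_filter_succAbove_eq]
    _ = PMF.uniformOfFintype (Fin (n + 1)) j := by
        rw [ENNReal.div_self (NeZero.ne _) (ENNReal.natCast_ne_top n), mul_one,
          PMF.uniformOfFintype_apply, Fintype.card_fin]

/-- Frequentist learning after draw-and-delete is frequentist learning.
Here `DD` is draw-and-delete, the unique map with `DD (acc v) = PMF.map acc (del v)`,
and `Flrn` is frequentist learning, assigning to `x` the probability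
(multiplicity of `x` in the multiset)/(size of the multiset). -/
theorem DD_bind_Flrn {X : Type u} [DecidableEq X] {K : ℕ} (hK : 1 ≤ K)
    (DD : Sym X (K + 1) → PMF (Sym X K))
    (hDD : ∀ v : Fin (K + 1) → X, DD (acc v) = PMF.map acc (del v))
    (Flrn : {n : ℕ} → Sym X n → PMF X)
    (hFlrn : ∀ {n : ℕ}, 1 ≤ n → ∀ (m : Sym X n) (x : X),
      Flrn m x = (Multiset.count x m.toMultiset : ℝ≥0∞) / (n : ℝ≥0∞))
    (m : Sym X (K + 1)) :
    (DD m).bind Flrn = Flrn m := by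
  have : NeZero K := ⟨Nat.one_le_iff_ne_zero.mp hK⟩
  have Flrn_acc {n : ℕ} [NeZero n] (v : Fin n → X) :
      Flrn (acc v) = (PMF.uniformOfFintype (Fin n)).map v := by
    ext x
    rw [hFlrn NeZero.one_le, count_acc, map_uniformOfFintype_apply, Fintype.card_fin]
  obtain ⟨v, rfl⟩ := acc_surjective m
  calc (DD (acc v)).bind Flrn
      = (PMF.uniformOfFintype (Fin (K + 1))).bind fun i => Flrn (acc (v ∘ i.succAbove)) := by
        rw [hDD, del, PMF.map_comp, PMF.bind_map]
        rfl
    _ = ((PMF.uniformOfFintype (Fin (K + 1))).bind fun i =>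
          (PMF.uniformOfFintype (Fin K)).map i.succAbove).map v := by
        simp only [Flrn_acc, PMF.map_bind, PMF.map_comp]
    _ = Flrn (acc v) := by
        rw [uniformOfFintype_bind_map_succAbove, Flrn_acc]
end

section
/- Multizip of independent multinomials is the multinomial of the product distribution: for all p : PMF X, q : PMF Y and K : ℕ, (mn K p).bind (fun m => (mn K q).bind (fun n => mzip m n)) = mn K (p ⊗ q), where p ⊗ q : PMF (X × Y) is the independent product distribution with mass p x * q y at (x, y). -/
universe u

/-!
Zipping commutes with permuting both arguments simultaneously, and accumulation forgets the order of
the zipped pairs. Hence a permutation of the left tuple can be moved to the right tuple, where an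
exchangeable law absorbs it. An i.i.d. law is exchangeable, and an i.i.d. law of pairs is the zip of
two independent i.i.d. laws.
-/

theorem map_apply_of_injective {α β : Type*} {f : α → β} (hf : f.Injective) (p : PMF α) (a : α) :
    p.map f (f a) = p a := by
  classical
  simp only [PMF.map_apply, hf.eq_iff, eq_comm (a := a), tsum_ite_eq]

theorem bind_map_prodMk_apply {α β : Type*} (p : PMF α) (q : PMF β) (a : α) (b : β) :
    p.bind (fun x => q.map (Prod.mk x)) (a, b) = p a * q b := by
  classical
  rw [PMF.bind_apply, tsum_eq_single a, map_apply_of_injective (Prod.mk_right_injective a)]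
  intro x hx
  have hmap : q.map (Prod.mk x) (a, b) = 0 := by
    simp [PMF.map_apply, hx.symm]
  rw [hmap, mul_zero]

theorem bind_map_pair_apply {ι : Type*} {X Y : ι → Type*} (P : PMF (∀ i, X i))
    (Q : PMF (∀ i, Y i)) (v : ∀ i, X i × Y i) :
    P.bind (fun a => Q.map fun b i => (a i, b i)) v =
      P (fun i => (v i).1) * Q (fun i => (v i).2) := by
  let e := Equiv.arrowProdEquivProdArrow ι X Y
  have hzip : P.bind (fun a => Q.map fun b i => (a i, b i)) =
      (P.bind fun a => Q.map (Prod.mk a)).map e.symm := by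
    simp only [PMF.map_bind, PMF.map_comp]
    rfl
  rw [hzip, ← e.symm_apply_apply v, map_apply_of_injective e.symm.injective]
  exact bind_map_prodMk_apply P Q _ _

theorem eq_bind_map_pair_of_apply_eq_prod {ι : Type*} [Fintype ι] {X Y : ι → Type*}
    {p : ∀ i, PMF (X i)} {q : ∀ i, PMF (Y i)} {P : PMF (∀ i, X i)} {Q : PMF (∀ i, Y i)}
    {R : PMF (∀ i, X i × Y i)} (hP : ∀ v, P v = ∏ i, p i (v i)) (hQ : ∀ v, Q v = ∏ i, q i (v i))
    (hR : ∀ v, R v = ∏ i, (p i).bind (fun x => (q i).map (Prod.mk x)) (v i)) :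
    R = P.bind fun a => Q.map fun b i => (a i, b i) := by
  ext v
  calc R v = ∏ i, p i (v i).1 * q i (v i).2 := by
        rw [hR]
        exact Finset.prod_congr rfl fun i _ => bind_map_prodMk_apply (p i) (q i) _ _
    _ = P (fun i => (v i).1) * Q (fun i => (v i).2) := by rw [Finset.prod_mul_distrib, hP, hQ]
    _ = P.bind (fun a => Q.map fun b i => (a i, b i)) v := (bind_map_pair_apply P Q v).symm

/-- Exchangeability of the law `P` of a random tuple: reindexing the tuple along any permutation of
the index type leaves `P` unchanged. -/
def IsExchangeable {ι X : Type*} (P : PMF (ι → X)) : Prop :=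
  ∀ σ : Equiv.Perm ι, P.map (fun v => v ∘ σ) = P

theorem isExchangeable_of_apply_eq_prod {ι X : Type*} [Fintype ι] {p : PMF X} {P : PMF (ι → X)}
    (hP : ∀ v, P v = ∏ i, p (v i)) : IsExchangeable P := by
  intro σ
  ext w
  obtain ⟨v, rfl⟩ : ∃ v, v ∘ σ = w := ⟨w ∘ σ.symm, by simp [Function.comp_assoc]⟩
  rw [map_apply_of_injective σ.surjective.injective_comp_right, hP, hP]
  exact (Equiv.prod_comp σ fun i => p (v i)).symm

-- Not `rfl`: in `perm`, `σ` ranges over `Fin K → Fin K` and the coercion acts on the uniform law.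
theorem perm_eq_map {X : Type*} {K : ℕ} (v : Fin K → X) :
    perm v =
      (PMF.uniformOfFintype (Equiv.Perm (Fin K))).map fun σ : Equiv.Perm (Fin K) => v ∘ σ :=
  PMF.map_comp _ _ _

theorem IsExchangeable.bind_perm {X : Type*} {K : ℕ} {P : PMF (Fin K → X)}
    (hP : IsExchangeable P) : P.bind perm = P := by
  let U := PMF.uniformOfFintype (Equiv.Perm (Fin K))
  calc P.bind perm
      = P.bind fun v => U.map fun σ : Equiv.Perm (Fin K) => v ∘ σ := by rw [funext perm_eq_map]
    _ = U.bind fun σ => P.map fun v => v ∘ σ := PMF.bind_comm _ _ _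
    _ = P := by simp only [hP _, PMF.bind_const]

theorem acc_comp_perm {X : Type*} {K : ℕ} (v : Fin K → X) (σ : Equiv.Perm (Fin K)) :
    acc (v ∘ σ) = acc v :=
  Subtype.ext (Multiset.coe_eq_coe.mpr (σ.ofFn_comp_perm v))

theorem IsExchangeable.map_acc_pair_comp_perm {X Y : Type*} {K : ℕ} {Q : PMF (Fin K → Y)}
    (hQ : IsExchangeable Q) (a : Fin K → X) (σ : Equiv.Perm (Fin K)) :
    Q.map (fun b => acc fun i => (a (σ i), b i)) = Q.map (fun b => acc fun i => (a i, b i)) := by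
  calc Q.map (fun b => acc fun i => (a (σ i), b i))
      = (Q.map fun b => b ∘ σ).map (fun b => acc fun i => (a (σ i), b i)) := by rw [hQ σ]
    _ = Q.map (fun b => acc ((fun i => (a i, b i)) ∘ σ)) := PMF.map_comp _ _ _
    _ = Q.map (fun b => acc fun i => (a i, b i)) := by simp only [acc_comp_perm]

theorem IsExchangeable.perm_bind_map_acc_pair {X Y : Type*} {K : ℕ} {Q : PMF (Fin K → Y)}
    (hQ : IsExchangeable Q) (a : Fin K → X) :
    (perm a).bind (fun a' => Q.map fun b => acc fun i => (a' i, b i)) =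
      Q.map fun b => acc fun i => (a i, b i) := by
  rw [perm_eq_map, PMF.bind_map]
  simp only [Function.comp_def, hQ.map_acc_pair_comp_perm, PMF.bind_const]

theorem mn_mzip_general {X Y : Type*} {K : ℕ} (P : PMF (Fin K → X)) {Q : PMF (Fin K → Y)}
    (hQ : IsExchangeable Q) {arrX : Sym X K → PMF (Fin K → X)} {arrY : Sym Y K → PMF (Fin K → Y)}
    (harrX : ∀ v, arrX (acc v) = perm v) (harrY : ∀ v, arrY (acc v) = perm v) :
    (P.map acc).bind (fun m => (Q.map acc).bind fun n =>
        (arrX m).bind fun a => (arrY n).map fun b => acc fun i => (a i, b i)) =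
      (P.bind fun a => Q.map fun b i => (a i, b i)).map acc := by
  have mzip_acc (v : Fin K → X) :
      (Q.bind fun w => (perm v).bind fun a => (perm w).map fun b => acc fun i => (a i, b i)) =
        Q.map fun b => acc fun i => (v i, b i) := by
    rw [PMF.bind_comm]
    simp only [← PMF.map_bind, hQ.bind_perm, hQ.perm_bind_map_acc_pair]
  simp only [PMF.bind_map, Function.comp_def, harrX, harrY, mzip_acc, PMF.map_bind, PMF.map_comp]

/-- Multizip of independent multinomials is the multinomial of the independent
product distribution `p ⊗ q = p.bind (fun x => PMF.map (Prod.mk x) q)`.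
Here `mn K p = PMF.map acc iidX`, etc., with `iid*` the i.i.d. sampling
distributions (mass the product of the individual masses), `arr` is the
arrangement map (the unique map with `arr (acc v) = perm v`), and the multizip is
`mzip m n = (arr m).bind (fun a => PMF.map (fun b => acc (fun i => (a i, b i))) (arr n))`. -/
theorem mn_mzip {X Y : Type u} {K : ℕ} (p : PMF X) (q : PMF Y)
    (arr : {Z : Type u} → Sym Z K → PMF (Fin K → Z))
    (harr : ∀ {Z : Type u} (v : Fin K → Z), arr (acc v) = perm v)
    (iidX : PMF (Fin K → X))
    (hiidX : ∀ v : Fin K → X, iidX v = ∏ i, p (v i))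
    (iidY : PMF (Fin K → Y))
    (hiidY : ∀ v : Fin K → Y, iidY v = ∏ i, q (v i))
    (iidXY : PMF (Fin K → X × Y))
    (hiidXY : ∀ v : Fin K → X × Y,
      iidXY v = ∏ i, (p.bind (fun x => PMF.map (Prod.mk x) q)) (v i)) :
    (PMF.map acc iidX).bind (fun m => (PMF.map acc iidY).bind (fun n =>
        (arr m).bind (fun a => PMF.map (fun b => acc (fun i => (a i, b i))) (arr n)))) =
      PMF.map acc iidXY := by
  rw [eq_bind_map_pair_of_apply_eq_prod hiidX hiidY hiidXY]
  exact mn_mzip_general iidX (isExchangeable_of_apply_eq_prod hiidY) harr harr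
end
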